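/- Let ⪰ be a preference (a reflexive and transitive binary relation) on X that is compatible with the expectation (X ⪰ Y implies E[X] ≥ E[Y]), and let C ⊂ X be law invariant with a nonconstant B ∈ C such that C ⊂ {Y ∈ X : B ⪰ Y}. For every nonconstant D ∈ X* with E[D] > 0 there exist a law-invariant functional φ : X → [−∞, ∞] and p ∈ ℝ such that (φ, C, D, p) is a feasible quadruple and: (i) φ is weakly increasing but no optimal solution is antimonotone with D; (ii) φ is increasing and Max(φ, C, D, p) ∈ ℝ but some optimal solution is not antimonotone with D. -/

import Mathlib

/-!
Let `φ(X) = E[X]` when `E[X] > E[B]` or `X` has the law of `B`, and `φ(X) = -∞` otherwise. Adding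
a positive constant to a variable of finite value pushes its mean strictly above `E[B]`, so `φ`
is increasing and weakly increasing. Every element of `C` has mean at most `E[B]`, hence on `C`
the functional `φ` equals `E[B]` on the rearrangements of `B` and `-∞` elsewhere: the optimal
solutions at price `p` are exactly the rearrangements `X` of `B` with `E[D X] = p`, as soon as
there is one.

Antimonotonicity with `D` and the law of `B` determine the joint law of `(X, D)`, so all antimonotone
rearrangements of `B` share one price (`integral_eq_of_antimonotone`). It remains to see that
rearrangements of `B` have at least two different prices (`exists_rearrangement`) and to choose `p`
different from the antimonotone price. For this, cut `Ω` into four quadrants by comparing `B` and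
`D` with their means. Two opposite quadrants have positive probability; inside them there are sets
`A₁` and `A₂` of equal positive measure. Exchanging the conditional laws of `B` on `A₁` and `A₂`
preserves the law of `B` and changes `E[D B]` strictly, since `(D - d) * (Y - B)` has a constant
sign and does not vanish on one of the two sets.

The exchange uses that atomless spaces are rich enough: by Sierpiński's theorem
(`exists_subset_measureReal_eq`) sets can be halved, a dyadic family of nested sets yields a uniform
variable on any measurable set (`exists_uniform`), and then any law can be realized there
(`exists_map_restrict_eq`).
-/

open MeasureTheory Set List
open scoped ENNReal NNReal

noncomputable section

namespace Collapse

variable {Ω : Type*} [MeasurableSpace Ω]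

/-- A measure is atomless (nonatomic) if every set of positive measure contains a
measurable subset of strictly smaller positive measure. -/
def IsAtomless (P : Measure Ω) : Prop :=
  ∀ A : Set Ω, MeasurableSet A → 0 < P A →
    ∃ B : Set Ω, MeasurableSet B ∧ B ⊆ A ∧ 0 < P B ∧ P B < P A

/-- `X` and `Y` have the same law under `P`. -/
def SameLaw (P : Measure Ω) (X Y : Ω → ℝ) : Prop :=
  Measure.map X P = Measure.map Y P

/-- `X` is not `P`-a.s. equal to a constant. -/
def Nonconstant (P : Measure Ω) (X : Ω → ℝ) : Prop :=
  ∀ c : ℝ, ¬ X =ᵐ[P] (fun _ => c)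

/-- `X` and `Y` are comonotone:
`P(X ≤ x, Y ≤ y) = min (P(X ≤ x)) (P(Y ≤ y))` for all `x y`. -/
def Comonotone (P : Measure Ω) (X Y : Ω → ℝ) : Prop :=
  ∀ x y : ℝ,
    P ({ω | X ω ≤ x} ∩ {ω | Y ω ≤ y}) = min (P {ω | X ω ≤ x}) (P {ω | Y ω ≤ y})

/-- `X` and `Y` are antimonotone:
`P(X ≤ x, Y ≤ y) = max (P(X ≤ x) + P(Y ≤ y) - 1) 0` for all `x y`
(in `ℝ≥0∞`, truncated subtraction realises the `max` with `0`). -/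
def Antimonotone (P : Measure Ω) (X Y : Ω → ℝ) : Prop :=
  ∀ x y : ℝ,
    P ({ω | X ω ≤ x} ∩ {ω | Y ω ≤ y}) = (P {ω | X ω ≤ x} + P {ω | Y ω ≤ y}) - 1

/-- `q` is a quantile function of `X` under `P`. -/
def IsQuantile (P : Measure Ω) (X : Ω → ℝ) (q : ℝ → ℝ) : Prop :=
  ∀ s ∈ Set.Ioo (0:ℝ) 1,
    sInf {x : ℝ | s ≤ (P {ω | X ω ≤ x}).toReal} ≤ q s ∧
    q s ≤ sInf {x : ℝ | s < (P {ω | X ω ≤ x}).toReal}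

/-- `X` belongs to `L^∞(P)`: measurable and essentially bounded. -/
def MemLinf (P : Measure Ω) (X : Ω → ℝ) : Prop :=
  Measurable X ∧ ∃ M : ℝ, ∀ᵐ ω ∂P, |X ω| ≤ M

/-- A pair `(𝒳, 𝒳*)` of law-invariant vector subspaces of `L¹(P)` containing `L^∞(P)`
such that `X * Y ∈ L¹(P)` for all `X ∈ 𝒳`, `Y ∈ 𝒳*` (Assumption 2.1). -/
structure PairedSpaces (P : Measure Ω) where
  carrier : Set (Ω → ℝ)
  dual : Set (Ω → ℝ)
  meas_carrier : ∀ X ∈ carrier, Measurable X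
  meas_dual : ∀ Y ∈ dual, Measurable Y
  int_carrier : ∀ X ∈ carrier, Integrable X P
  int_dual : ∀ Y ∈ dual, Integrable Y P
  smul_carrier : ∀ X ∈ carrier, ∀ c : ℝ, (fun ω => c * X ω) ∈ carrier
  add_carrier : ∀ X ∈ carrier, ∀ X' ∈ carrier, (fun ω => X ω + X' ω) ∈ carrier
  smul_dual : ∀ Y ∈ dual, ∀ c : ℝ, (fun ω => c * Y ω) ∈ dual
  add_dual : ∀ Y ∈ dual, ∀ Y' ∈ dual, (fun ω => Y ω + Y' ω) ∈ dual
  linf_carrier : ∀ X : Ω → ℝ, MemLinf P X → X ∈ carrier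
  linf_dual : ∀ Y : Ω → ℝ, MemLinf P Y → Y ∈ dual
  lawinv_carrier : ∀ X ∈ carrier, ∀ X' : Ω → ℝ, Measurable X' → SameLaw P X' X → X' ∈ carrier
  lawinv_dual : ∀ Y ∈ dual, ∀ Y' : Ω → ℝ, Measurable Y' → SameLaw P Y' Y → Y' ∈ dual
  mul_int : ∀ X ∈ carrier, ∀ Y ∈ dual, Integrable (fun ω => X ω * Y ω) P

/-- A subset `C` of `𝒳` is closed in the weak topology `σ(𝒳, 𝒳*)`, i.e. the topology
on `𝒳` induced by the linear functionals `X ↦ E[X Y]`, `Y ∈ 𝒳*`. -/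
def WeakClosed (P : Measure Ω) (pr : PairedSpaces P) (C : Set (Ω → ℝ)) : Prop :=
  @IsClosed ↥pr.carrier
    (TopologicalSpace.induced
      (fun X : ↥pr.carrier => (fun Y : ↥pr.dual => ∫ ω, (X : Ω → ℝ) ω * (Y : Ω → ℝ) ω ∂P))
      Pi.topologicalSpace)
    {X : ↥pr.carrier | (X : Ω → ℝ) ∈ C}

/-- `φ` is `σ(𝒳, 𝒳*)`-lower semicontinuous: every sublevel set is `σ(𝒳, 𝒳*)`-closed. -/
def WeakLSC (P : Measure Ω) (pr : PairedSpaces P) (φ : (Ω → ℝ) → EReal) : Prop :=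
  ∀ m : ℝ, WeakClosed P pr {X | X ∈ pr.carrier ∧ φ X ≤ (m : EReal)}

/-- The (upper) support functional `σ_C(Y) = sup_{X ∈ C} E[XY]`. -/
def suppFn (P : Measure Ω) (C : Set (Ω → ℝ)) (Y : Ω → ℝ) : EReal :=
  ⨆ X ∈ C, ((∫ ω, X ω * Y ω ∂P : ℝ) : EReal)

/-- The conjugate functional `φ*(Y) = sup_{X ∈ 𝒳} (E[XY] - φ(X))`. -/
def conj (P : Measure Ω) (𝒳 : Set (Ω → ℝ)) (φ : (Ω → ℝ) → EReal) (Y : Ω → ℝ) : EReal :=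
  ⨆ X ∈ 𝒳, (((∫ ω, X ω * Y ω ∂P : ℝ) : EReal) - φ X)

/-- The recession cone `C^∞ = {X ∈ 𝒳 : {X} + C ⊆ C}`. -/
def recCone (𝒳 C : Set (Ω → ℝ)) : Set (Ω → ℝ) :=
  {X | X ∈ 𝒳 ∧ ∀ U ∈ C, (fun ω => X ω + U ω) ∈ C}

/-- A functional on `𝒳` is law invariant. -/
def LawInvariantFn (P : Measure Ω) (𝒳 : Set (Ω → ℝ)) (φ : (Ω → ℝ) → EReal) : Prop :=
  ∀ X ∈ 𝒳, ∀ Y ∈ 𝒳, SameLaw P X Y → φ X = φ Y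

/-- A set of random variables is law invariant. -/
def LawInvariantSet (P : Measure Ω) (C : Set (Ω → ℝ)) : Prop :=
  ∀ X ∈ C, ∀ Y : Ω → ℝ, Measurable Y → SameLaw P Y X → Y ∈ C

/-- A functional on `𝒳` is expectation invariant. -/
def ExpectationInvariantFn (P : Measure Ω) (𝒳 : Set (Ω → ℝ)) (φ : (Ω → ℝ) → EReal) : Prop :=
  ∀ X ∈ 𝒳, ∀ Y ∈ 𝒳, (∫ ω, X ω ∂P) = (∫ ω, Y ω ∂P) → φ X = φ Y

/-- Convexity of a functional `φ : 𝒳 → (-∞, ∞]`. -/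
def ConvexFn (𝒳 : Set (Ω → ℝ)) (φ : (Ω → ℝ) → EReal) : Prop :=
  ∀ X ∈ 𝒳, ∀ Y ∈ 𝒳, ∀ l : ℝ, l ∈ Set.Icc (0:ℝ) 1 →
    φ (fun ω => l * X ω + (1 - l) * Y ω) ≤ (l : EReal) * φ X + ((1 - l : ℝ) : EReal) * φ Y

/-- Quasiconvexity of a functional `φ : 𝒳 → (-∞, ∞]`. -/
def QuasiconvexFn (𝒳 : Set (Ω → ℝ)) (φ : (Ω → ℝ) → EReal) : Prop :=
  ∀ X ∈ 𝒳, ∀ Y ∈ 𝒳, ∀ l : ℝ, l ∈ Set.Icc (0:ℝ) 1 →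
    φ (fun ω => l * X ω + (1 - l) * Y ω) ≤ max (φ X) (φ Y)

/-- Convexity of a set of random variables. -/
def ConvexSet (C : Set (Ω → ℝ)) : Prop :=
  ∀ X ∈ C, ∀ Y ∈ C, ∀ l : ℝ, l ∈ Set.Icc (0:ℝ) 1 →
    (fun ω => l * X ω + (1 - l) * Y ω) ∈ C

/-- The expectation of `Z` as an extended real number,
`E[Z] = ∫ Z⁺ dP - ∫ Z⁻ dP` computed in `EReal`. -/
def eExp (P : Measure Ω) (Z : Ω → ℝ) : EReal :=
  ((∫⁻ ω, ENNReal.ofReal (Z ω) ∂P : ℝ≥0∞) : EReal) -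
    ((∫⁻ ω, ENNReal.ofReal (-(Z ω)) ∂P : ℝ≥0∞) : EReal)

/-- `X` dominates `Y` in the increasing convex (second-order stochastic dominance) sense:
`E[f(X)] ≥ E[f(Y)]` for every nondecreasing convex `f : ℝ → ℝ`. -/
def SSDdom (P : Measure Ω) (X Y : Ω → ℝ) : Prop :=
  ∀ f : ℝ → ℝ, Monotone f → ConvexOn ℝ Set.univ f →
    eExp P (fun ω => f (Y ω)) ≤ eExp P (fun ω => f (X ω))

/-- A consistent risk measure on `𝒳`: a proper, cash-additive, normalised functional
that is consistent with second-order stochastic dominance. -/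
def IsConsistentRM (P : Measure Ω) (𝒳 : Set (Ω → ℝ)) (φ : (Ω → ℝ) → EReal) : Prop :=
  (∀ X ∈ 𝒳, φ X ≠ (⊥ : EReal)) ∧
  (∃ X ∈ 𝒳, φ X ≠ (⊤ : EReal)) ∧
  (∀ X ∈ 𝒳, ∀ m : ℝ, φ (fun ω => X ω + m) = φ X + (m : EReal)) ∧
  (∀ X ∈ 𝒳, ∀ Y ∈ 𝒳, SSDdom P X Y → φ Y ≤ φ X) ∧
  φ (fun _ => (0:ℝ)) = (0 : EReal)

/-- A capacity on `(Ω, F)`. -/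
structure Capacity (Ω : Type*) [MeasurableSpace Ω] where
  toFun : Set Ω → ℝ
  empty' : toFun ∅ = 0
  univ' : toFun Set.univ = 1
  mono' : ∀ ⦃A B : Set Ω⦄, MeasurableSet A → MeasurableSet B → A ⊆ B → toFun A ≤ toFun B
  nonneg' : ∀ A : Set Ω, MeasurableSet A → 0 ≤ toFun A
  le_one' : ∀ A : Set Ω, MeasurableSet A → toFun A ≤ 1

/-- A capacity is coherent if it is the upper envelope of a family of probability measures. -/
def Capacity.Coherent (ν : Capacity Ω) : Prop :=
  ∃ Q : Set (Measure Ω), Q.Nonempty ∧ (∀ m ∈ Q, IsProbabilityMeasure m) ∧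
    ∀ A : Set Ω, MeasurableSet A → ν.toFun A = ⨆ m ∈ Q, (m A).toReal

/-- A capacity is law invariant (with respect to `P`). -/
def Capacity.LawInvariant (P : Measure Ω) (μ : Capacity Ω) : Prop :=
  ∀ A B : Set Ω, MeasurableSet A → MeasurableSet B → P A = P B → μ.toFun A = μ.toFun B

/-- `μ` is the Jaffray-Philippe capacity represented by the pair `(ν, α)`:
`μ = α ν + (1 - α) ν̄` with `ν` coherent and `α ∈ [0,1]`,
where `ν̄(A) = 1 - ν(Aᶜ)` is the dual capacity. -/
def IsJPRep (μ ν : Capacity Ω) (α : ℝ) : Prop :=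
  ν.Coherent ∧ α ∈ Set.Icc (0:ℝ) 1 ∧
    ∀ A : Set Ω, MeasurableSet A → μ.toFun A = α * ν.toFun A + (1 - α) * (1 - ν.toFun Aᶜ)

/-- The Choquet integral `E_μ[X] = ∫_{-∞}^0 (μ(X > s) - 1) ds + ∫_0^∞ μ(X > s) ds`. -/
def choquet (μ : Capacity Ω) (X : Ω → ℝ) : ℝ :=
  (∫ s in Set.Iio (0:ℝ), (μ.toFun {ω | s < X ω} - 1)) +
    ∫ s in Set.Ici (0:ℝ), μ.toFun {ω | s < X ω}

/-- `X` is an optimal solution of: maximise `φ` over `C` subject to `E[D X] = p`. -/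
def IsOptimal (P : Measure Ω) (φ : (Ω → ℝ) → EReal) (C : Set (Ω → ℝ)) (D : Ω → ℝ)
    (p : ℝ) (X : Ω → ℝ) : Prop :=
  X ∈ C ∧ (∫ ω, D ω * X ω ∂P) = p ∧
    ∀ X' ∈ C, (∫ ω, D ω * X' ω ∂P) = p → φ X' ≤ φ X

/-- A set of random variables is increasing. -/
def IncreasingSet (C : Set (Ω → ℝ)) : Prop :=
  ∀ X ∈ C, ∀ m : ℝ, 0 ≤ m → (fun ω => X ω + m) ∈ C

/-- `φ` is weakly increasing: `φ(X + m) ≥ φ(X)` for `m ≥ 0`. -/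
def WeaklyIncreasingFn (𝒳 : Set (Ω → ℝ)) (φ : (Ω → ℝ) → EReal) : Prop :=
  ∀ X ∈ 𝒳, ∀ m : ℝ, 0 ≤ m → φ X ≤ φ (fun ω => X ω + m)

/-- `φ` is increasing: `φ(X + m) > φ(X)` whenever `φ(X) ∈ ℝ` and `m > 0`. -/
def IncreasingFn (𝒳 : Set (Ω → ℝ)) (φ : (Ω → ℝ) → EReal) : Prop :=
  ∀ X ∈ 𝒳, (φ X ≠ (⊤ : EReal) ∧ φ X ≠ (⊥ : EReal)) → ∀ m : ℝ, 0 < m →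
    φ X < φ (fun ω => X ω + m)


/-! ### Subsets of prescribed measure -/

/-- Exhaustion principle: a property of sets that is stable under increasing countable unions
has an instance which is maximal in measure among all its extensions. -/
lemma exists_maximal_measure (P : Measure Ω) [IsProbabilityMeasure P] (p : Set Ω → Prop)
    (h0 : p ∅) (hU : ∀ E : ℕ → Set Ω, Monotone E → (∀ n, p (E n)) → p (⋃ n, E n)) :
    ∃ E, p E ∧ ∀ F, p F → E ⊆ F → P.real F ≤ P.real E := by
  have step : ∀ (ε : ℝ), 0 < ε → ∀ E, p E →
      ∃ F, p F ∧ E ⊆ F ∧ ∀ G, p G → E ⊆ G → P.real G < P.real F + ε := by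
    intro ε hε E hE
    let S : Set ℝ := {r | ∃ F, p F ∧ E ⊆ F ∧ r = P.real F}
    have hne : S.Nonempty := ⟨_, E, hE, subset_rfl, rfl⟩
    have hbd : BddAbove S := ⟨1, by rintro _ ⟨F, -, -, rfl⟩; exact measureReal_le_one⟩
    obtain ⟨_, ⟨F, hF, hEF, rfl⟩, hlt⟩ := exists_lt_of_lt_csSup hne (sub_lt_self (sSup S) hε)
    exact ⟨F, hF, hEF, fun G hG hEG => by
      linarith [le_csSup hbd (show P.real G ∈ S from ⟨G, hG, hEG, rfl⟩)]⟩
  choose! next hp hsub hmax using step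
  let E : ℕ → Set Ω := fun n => Nat.rec ∅ (fun n E => next (1 / ((n : ℝ) + 1)) E) n
  have hpos (n : ℕ) : (0 : ℝ) < 1 / ((n : ℝ) + 1) := by positivity
  have hE : ∀ n, p (E n) := by
    intro n
    induction n with
    | zero => exact h0
    | succ n ih => exact hp _ (hpos n) _ ih
  have hmono : Monotone E := monotone_nat_of_le_succ fun n => hsub _ (hpos n) _ (hE n)
  refine ⟨⋃ n, E n, hU E hmono hE, fun F hF hEF => ?_⟩
  have key : ∀ n : ℕ, P.real F ≤ P.real (⋃ n, E n) + 1 / ((n : ℝ) + 1) := fun n => by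
    have h1 := hmax _ (hpos n) _ (hE n) F hF ((subset_iUnion E n).trans hEF)
    have h2 : P.real (E (n + 1)) ≤ P.real (⋃ n, E n) := measureReal_mono (subset_iUnion E (n + 1))
    change P.real F < P.real (E (n + 1)) + _ at h1
    linarith
  have hlim := (tendsto_one_div_add_atTop_nhds_zero_nat (𝕜 := ℝ)).const_add (P.real (⋃ n, E n))
  rw [add_zero] at hlim
  exact ge_of_tendsto' hlim key

lemma exists_small_subset (P : Measure Ω) [IsProbabilityMeasure P] (hP : IsAtomless P)
    {A : Set Ω} (hA : MeasurableSet A) (hpos : 0 < P.real A) {ε : ℝ} (hε : 0 < ε) :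
    ∃ B, MeasurableSet B ∧ B ⊆ A ∧ 0 < P.real B ∧ P.real B < ε := by
  have half : ∀ A, MeasurableSet A → 0 < P.real A →
      ∃ B, MeasurableSet B ∧ B ⊆ A ∧ 0 < P.real B ∧ P.real B ≤ P.real A / 2 := by
    intro A hA hpos
    obtain ⟨B, hB, hBA, h1, h2⟩ := hP A hA (ENNReal.toReal_pos_iff.1 hpos).1
    have h1' : 0 < P.real B := ENNReal.toReal_pos h1.ne' (measure_ne_top _ _)
    have h2' : P.real B < P.real A := (ENNReal.toReal_lt_toReal
      (measure_ne_top _ _) (measure_ne_top _ _)).2 h2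
    by_cases h : P.real B ≤ P.real A / 2
    · exact ⟨B, hB, hBA, h1', h⟩
    · have := measureReal_sdiff (μ := P) hBA hB
      exact ⟨A \ B, hA.diff hB, sdiff_subset, by linarith, by linarith⟩
  have iter : ∀ n : ℕ, ∃ B, MeasurableSet B ∧ B ⊆ A ∧ 0 < P.real B ∧ P.real B ≤ (1 / 2) ^ n := by
    intro n
    induction n with
    | zero => exact ⟨A, hA, subset_rfl, hpos, by simp⟩
    | succ n ih =>
      obtain ⟨B, hB, hBA, h1, h2⟩ := ih
      obtain ⟨B', hB', hBB', h1', h2'⟩ := half B hB h1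
      exact ⟨B', hB', hBB'.trans hBA, h1', by rw [pow_succ]; linarith⟩
  obtain ⟨n, hn⟩ := exists_pow_lt_of_lt_one hε (by norm_num : (1 / 2 : ℝ) < 1)
  obtain ⟨B, hB, hBA, h1, h2⟩ := iter n
  exact ⟨B, hB, hBA, h1, h2.trans_lt hn⟩

/-- Sierpiński's theorem: an atomless measure takes every intermediate value. -/
lemma exists_subset_measureReal_eq (P : Measure Ω) [IsProbabilityMeasure P] (hP : IsAtomless P)
    {A : Set Ω} (hA : MeasurableSet A) {c : ℝ} (hc0 : 0 ≤ c) (hc : c ≤ P.real A) :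
    ∃ E, MeasurableSet E ∧ E ⊆ A ∧ P.real E = c := by
  obtain ⟨E, ⟨hE, hEA, hEc⟩, hmax⟩ := exists_maximal_measure P
    (fun E => MeasurableSet E ∧ E ⊆ A ∧ P.real E ≤ c) ⟨.empty, empty_subset _, by simpa using hc0⟩
    (by
      intro E hmono h
      refine ⟨.iUnion fun n => (h n).1, iUnion_subset fun n => (h n).2.1, ?_⟩
      have := tendsto_measure_iUnion_atTop (μ := P) hmono
      have := (ENNReal.tendsto_toReal (measure_ne_top P _)).comp this
      exact le_of_tendsto' this fun n => (h n).2.2)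
  refine ⟨E, hE, hEA, le_antisymm hEc ?_⟩
  by_contra! hlt
  have hd := measureReal_sdiff (μ := P) hEA hE
  obtain ⟨B, hB, hBA, h1, h2⟩ := exists_small_subset P hP (hA.diff hE) (by linarith)
    (sub_pos.2 hlt)
  have hdisj : Disjoint E B := disjoint_left.2 fun x hx hxB => (hBA hxB).2 hx
  have hu : P.real (E ∪ B) = P.real E + P.real B := measureReal_union hdisj hB
  have := hmax (E ∪ B) ⟨hE.union hB, union_subset hEA (hBA.trans sdiff_subset), by linarith⟩
    subset_union_left
  linarith

lemma exists_between_half (P : Measure Ω) [IsProbabilityMeasure P] (hP : IsAtomless P)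
    {S T : Set Ω} (hS : MeasurableSet S) (hT : MeasurableSet T) (hST : S ⊆ T) :
    ∃ M, MeasurableSet M ∧ S ⊆ M ∧ M ⊆ T ∧ P.real M = (P.real S + P.real T) / 2 := by
  have hd := measureReal_sdiff (μ := P) hST hS
  have hm : P.real S ≤ P.real T := measureReal_mono hST
  obtain ⟨E, hE, hEA, h⟩ := exists_subset_measureReal_eq P hP (hT.diff hS)
    (c := (P.real T - P.real S) / 2) (by linarith) (by linarith)
  have hdisj : Disjoint S E := disjoint_left.2 fun x hx hxB => (hEA hxB).2 hx
  refine ⟨S ∪ E, hS.union hE, subset_union_left, union_subset hST (hEA.trans sdiff_subset), ?_⟩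
  rw [measureReal_union hdisj hE, h]
  ring

/-! ### Realizing arbitrary laws on a set -/

/-- On a measurable set `A` of an atomless space there are nested sets `E n k`, `k ≤ 2 ^ n`, of
measure `k / 2 ^ n * P A`, refining each other as `n` grows. -/
lemma exists_dyadic_family (P : Measure Ω) [IsProbabilityMeasure P] (hP : IsAtomless P)
    {A : Set Ω} (hA : MeasurableSet A) :
    ∃ E : ℕ → ℕ → Set Ω, (∀ n k, MeasurableSet (E n k)) ∧ (∀ n, Monotone (E n)) ∧
      (∀ n k, E (n + 1) (2 * k) = E n k) ∧
      (∀ n k, k ≤ 2 ^ n → P.real (E n k) = (k : ℝ) / 2 ^ n * P.real A) ∧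
      (∀ n k, E n k ⊆ A) := by
  choose! mid hmeas hle hge hmid using
    fun S T (hS : MeasurableSet S) (hT : MeasurableSet T) (h : S ⊆ T) =>
      exists_between_half P hP hS hT h
  let E : ℕ → ℕ → Set Ω := fun n => Nat.rec (fun k => if k = 0 then ∅ else A)
    (fun _ E k => if Even k then E (k / 2) else mid (E (k / 2)) (E (k / 2 + 1))) n
  have hE0 (k : ℕ) : E 0 k = if k = 0 then ∅ else A := rfl
  have hEeven (n k : ℕ) : E (n + 1) (2 * k) = E n k := by
    change (if Even (2 * k) then E n (2 * k / 2) else _) = _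
    rw [if_pos (even_two_mul k)]
    congr 1
    lia
  have hEodd (n k : ℕ) : E (n + 1) (2 * k + 1) = mid (E n k) (E n (k + 1)) := by
    change (if Even (2 * k + 1) then _ else
      mid (E n ((2 * k + 1) / 2)) (E n ((2 * k + 1) / 2 + 1))) = _
    rw [if_neg (by simp)]
    have : (2 * k + 1) / 2 = k := by lia
    rw [this]
  have hparity (k : ℕ) : (∃ j, k = 2 * j) ∨ ∃ j, k = 2 * j + 1 := by
    rcases Nat.even_or_odd' k with ⟨j, h | h⟩
    exacts [.inl ⟨j, h⟩, .inr ⟨j, h⟩]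
  have hbasic : ∀ n, (∀ k, MeasurableSet (E n k)) ∧ (∀ k, E n k ⊆ E n (k + 1)) ∧
      (∀ k, E n k ⊆ A) ∧ ∀ k, k ≤ 2 ^ n → P.real (E n k) = (k : ℝ) / 2 ^ n * P.real A := by
    intro n
    induction n with
    | zero =>
      refine ⟨fun k => ?_, fun k => ?_, fun k => ?_, fun k hk => ?_⟩
      · rw [hE0]; split_ifs <;> simp [hA]
      · rw [hE0, hE0]; split_ifs <;> simp_all
      · rw [hE0]; split_ifs <;> simp
      · rw [hE0]
        have : k = 0 ∨ k = 1 := by simp at hk; lia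
        rcases this with rfl | rfl <;> simp
    | succ n ih =>
      obtain ⟨im, is, iA, iv⟩ := ih
      refine ⟨fun k => ?_, fun k => ?_, fun k => ?_, fun k hk => ?_⟩
      · rcases hparity k with ⟨j, rfl | rfl⟩ | ⟨j, rfl⟩
        · rw [hEeven]; exact im _
        · rw [hEodd]; exact hmeas _ _ (im _) (im _) (is _)
      · rcases hparity k with ⟨j, rfl⟩ | ⟨j, rfl⟩
        · rw [hEeven, hEodd]; exact hle _ _ (im _) (im _) (is _)
        · rw [show 2 * j + 1 + 1 = 2 * (j + 1) by ring, hEeven, hEodd]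
          exact hge _ _ (im _) (im _) (is _)
      · rcases hparity k with ⟨j, rfl⟩ | ⟨j, rfl⟩
        · rw [hEeven]; exact iA _
        · rw [hEodd]; exact (hge _ _ (im _) (im _) (is _)).trans (iA _)
      · rw [pow_succ] at hk
        rcases hparity k with ⟨j, rfl⟩ | ⟨j, rfl⟩
        · rw [hEeven, iv _ (by lia), pow_succ]; push_cast; field_simp
        · rw [hEodd, hmid _ _ (im _) (im _) (is _), iv _ (by lia), iv _ (by lia)]
          push_cast; field_simp; ring
  exact ⟨E, fun n => (hbasic n).1, fun n => monotone_nat_of_le_succ (hbasic n).2.1, hEeven,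
    fun n => (hbasic n).2.2.2, fun n => (hbasic n).2.2.1⟩

/-- An atomless space carries, on every measurable set `A`, a uniformly distributed variable. -/
lemma exists_uniform (P : Measure Ω) [IsProbabilityMeasure P] (hP : IsAtomless P)
    {A : Set Ω} (hA : MeasurableSet A) :
    ∃ U : Ω → unitInterval, Measurable U ∧
      Measure.map U (P.restrict A) = P A • (volume : Measure unitInterval) := by
  classical
  obtain ⟨E, hmeas, hmono, heven, hval, hEA⟩ := exists_dyadic_family P hP hA
  have hshift (n k j : ℕ) : E (n + j) (k * 2 ^ j) = E n k := by
    induction j with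
    | zero => simp
    | succ j ih => rw [← ih, ← heven (n + j), ← add_assoc]; congr 1; ring
  have hsub {n k m l : ℕ} (h : (k : ℝ) / 2 ^ n ≤ (l : ℝ) / 2 ^ m) : E n k ⊆ E m l := by
    rw [← hshift n k m, ← hshift m l n, add_comm m n]
    apply hmono
    rw [div_le_div_iff₀ (by positivity) (by positivity)] at h
    exact_mod_cast h
  -- `V` records the first dyadic level at which a point enters the nested family.
  let g : ℕ × ℕ → Ω → unitInterval := fun i ω =>
    if ω ∈ E i.1 i.2 then Set.projIcc 0 1 zero_le_one ((i.2 : ℝ) / 2 ^ i.1) else 1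
  let V : Ω → unitInterval := fun ω => ⨅ i, g i ω
  have hV : Measurable V := .iInf fun i =>
    Measurable.ite (hmeas _ _) measurable_const measurable_const
  refine ⟨V, hV, ?_⟩
  have hlt (t : unitInterval) (ω : Ω) :
      V ω < t ↔ ∃ n k, k ≤ 2 ^ n ∧ ω ∈ E n k ∧ (k : ℝ) / 2 ^ n < t := by
    rw [iInf_lt_iff]
    constructor
    · rintro ⟨⟨n, k⟩, h⟩
      by_cases hω : ω ∈ E n k
      · simp only [g, if_pos hω] at h
        have h0 : (0 : ℝ) ≤ (k : ℝ) / 2 ^ n := by positivity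
        have h' : min 1 ((k : ℝ) / 2 ^ n) < t := by
          have := Subtype.coe_lt_coe.2 h
          rw [Set.coe_projIcc] at this
          simpa [h0] using this
        have h1 : (k : ℝ) / 2 ^ n < t := (min_lt_iff.1 h').resolve_left (not_lt.2 t.2.2)
        refine ⟨n, k, ?_, hω, h1⟩
        have := (h1.trans_le t.2.2).le
        rw [div_le_one (by positivity)] at this
        exact_mod_cast this
      · simp only [g, if_neg hω] at h
        exact absurd h (not_lt.2 t.2.2)
    · rintro ⟨n, k, -, hω, h⟩
      refine ⟨(n, k), ?_⟩
      simp only [g, if_pos hω]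
      rw [← Subtype.coe_lt_coe, Set.coe_projIcc]
      have h0 : (0 : ℝ) ≤ (k : ℝ) / 2 ^ n := by positivity
      rw [max_eq_right (le_min zero_le_one h0)]
      exact (min_le_right _ _).trans_lt h
  have hmeasure (t : unitInterval) : P.real (V ⁻¹' Iio t ∩ A) = t * P.real A := by
    have hlim : Filter.Tendsto (fun n : ℕ => (1 / 2 : ℝ) ^ n) Filter.atTop (nhds 0) :=
      tendsto_pow_atTop_nhds_zero_of_lt_one (by norm_num) (by norm_num)
    have hA1 : P.real A ≤ 1 := measureReal_le_one
    have hA0 : 0 ≤ P.real A := measureReal_nonneg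
    have ht0 : (0 : ℝ) ≤ t := t.2.1
    have ht1 : (t : ℝ) ≤ 1 := t.2.2
    apply le_antisymm
    · have hlim' := hlim.const_add ((t : ℝ) * P.real A)
      rw [add_zero] at hlim'
      refine ge_of_tendsto' hlim' fun n => ?_
      have hl : (t : ℝ) * 2 ^ n ≤ ⌈(t : ℝ) * 2 ^ n⌉₊ := Nat.le_ceil _
      have hu : (⌈(t : ℝ) * 2 ^ n⌉₊ : ℝ) < t * 2 ^ n + 1 := Nat.ceil_lt_add_one (by positivity)
      set l := ⌈(t : ℝ) * 2 ^ n⌉₊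
      have hl2 : l ≤ 2 ^ n := by
        apply Nat.ceil_le.2
        push_cast
        exact mul_le_of_le_one_left (by positivity) ht1
      have hl' : (t : ℝ) ≤ l / 2 ^ n := by rwa [le_div_iff₀ (by positivity)]
      have hu' : (l : ℝ) / 2 ^ n ≤ t + (1 / 2) ^ n := by
        rw [div_le_iff₀ (by positivity), add_mul, ← mul_pow]; norm_num; linarith
      have hs : V ⁻¹' Iio t ∩ A ⊆ E n l := by
        rintro ω ⟨hω, -⟩
        obtain ⟨m, k, -, h1, h2⟩ := (hlt t ω).1 hω
        exact hsub (h2.le.trans hl') h1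
      have hp : (0 : ℝ) ≤ (1 / 2) ^ n := by positivity
      calc P.real (V ⁻¹' Iio t ∩ A) ≤ P.real (E n l) := measureReal_mono hs
        _ = l / 2 ^ n * P.real A := hval _ _ hl2
        _ ≤ (t + (1 / 2) ^ n) * P.real A := by gcongr
        _ ≤ _ := by nlinarith
    · have hlim' := hlim.const_sub ((t : ℝ) * P.real A)
      rw [sub_zero] at hlim'
      refine le_of_tendsto' hlim' fun n => ?_
      have hp : (0 : ℝ) ≤ (1 / 2) ^ n := by positivity
      rcases Nat.eq_zero_or_pos ⌈(t : ℝ) * 2 ^ n⌉₊ with hz | hz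
      · have : (t : ℝ) * 2 ^ n ≤ 0 := Nat.ceil_eq_zero.1 hz
        have : (t : ℝ) ≤ 0 := by
          by_contra! h
          have : 0 < (t : ℝ) * 2 ^ n := by positivity
          linarith
        have h0 : (t : ℝ) = 0 := le_antisymm this ht0
        rw [h0]
        have : 0 ≤ P.real (V ⁻¹' Iio t ∩ A) := measureReal_nonneg
        linarith
      · have hl : (t : ℝ) * 2 ^ n ≤ ⌈(t : ℝ) * 2 ^ n⌉₊ := Nat.le_ceil _
        have hu : (⌈(t : ℝ) * 2 ^ n⌉₊ : ℝ) < t * 2 ^ n + 1 := Nat.ceil_lt_add_one (by positivity)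
        have hl2 : ⌈(t : ℝ) * 2 ^ n⌉₊ ≤ 2 ^ n := by
          apply Nat.ceil_le.2
          push_cast
          exact mul_le_of_le_one_left (by positivity) ht1
        obtain ⟨l, hl'⟩ := Nat.exists_eq_succ_of_ne_zero hz.ne'
        rw [hl'] at hl hu hl2
        push_cast at hl hu
        have hlt' : (l : ℝ) / 2 ^ n < t := by
          rw [div_lt_iff₀ (by positivity)]; linarith
        have hge : (t : ℝ) - (1 / 2) ^ n ≤ l / 2 ^ n := by
          rw [le_div_iff₀ (by positivity), sub_mul, ← mul_pow]; norm_num; linarith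
        have hs : E n l ⊆ V ⁻¹' Iio t ∩ A := fun ω hω =>
          ⟨(hlt t ω).2 ⟨n, l, by lia, hω, hlt'⟩, hEA _ _ hω⟩
        calc (t : ℝ) * P.real A - (1 / 2) ^ n ≤ (t - (1 / 2) ^ n) * P.real A := by nlinarith
          _ ≤ l / 2 ^ n * P.real A := by gcongr
          _ = P.real (E n l) := (hval _ _ (by lia)).symm
          _ ≤ _ := measureReal_mono hs
  have : IsFiniteMeasure (P A • (volume : Measure unitInterval)) :=
    Measure.smul_finite _ (measure_ne_top _ _)
  refine Measure.ext_of_Ici _ _ fun t => ?_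
  have hIio : Measure.map V (P.restrict A) (Iio t) = (P A • (volume : Measure unitInterval)) (Iio t)
      := by
    rw [Measure.map_apply hV measurableSet_Iio, Measure.restrict_apply (hV measurableSet_Iio),
      Measure.smul_apply, unitInterval.volume_Iio, smul_eq_mul,
      ← ENNReal.ofReal_toReal (measure_ne_top P (V ⁻¹' Iio t ∩ A)),
      ← ENNReal.ofReal_toReal (measure_ne_top P A), ← ENNReal.ofReal_mul ENNReal.toReal_nonneg]
    congr 1
    rw [mul_comm]
    exact hmeasure t
  rw [← compl_Iio, measure_compl measurableSet_Iio (measure_ne_top _ _),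
    measure_compl measurableSet_Iio (measure_ne_top _ _), hIio,
    Measure.map_apply hV .univ]
  simp

/-- Every law of the right total mass is the law of some variable on a set `A`. -/
lemma exists_map_restrict_eq (P : Measure Ω) [IsProbabilityMeasure P] (hP : IsAtomless P)
    {A : Set Ω} (hA : MeasurableSet A) (hpos : P A ≠ 0) (μ : Measure ℝ) (hμ : μ univ = P A) :
    ∃ Y : Ω → ℝ, Measurable Y ∧ Measure.map Y (P.restrict A) = μ := by
  obtain ⟨U, hU, hmap⟩ := exists_uniform P hP hA
  have : IsProbabilityMeasure ((P A)⁻¹ • μ) := ⟨by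
    rw [Measure.smul_apply, hμ, smul_eq_mul, ENNReal.inv_mul_cancel hpos (measure_ne_top _ _)]⟩
  obtain ⟨f, hf, hfm⟩ := Measure.exists_measurable_map_eq ((P A)⁻¹ • μ)
  refine ⟨f ∘ U, hf.comp hU, ?_⟩
  rw [← Measure.map_map hf hU, hmap, Measure.map_smul, hfm, smul_smul,
    ENNReal.mul_inv_cancel hpos (measure_ne_top _ _), one_smul]

/-! ### Antimonotone couplings and rearrangements -/

/-- Antimonotonicity with `D` together with the law of `X` determines the joint law of `(X, D)`,
hence the price `E[D X]`. -/
lemma integral_eq_of_antimonotone (P : Measure Ω) [IsProbabilityMeasure P] {X Y D : Ω → ℝ}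
    (hX : Measurable X) (hY : Measurable Y) (hD : Measurable D) (hXY : SameLaw P X Y)
    (haX : Antimonotone P X D) (haY : Antimonotone P Y D) :
    ∫ ω, D ω * X ω ∂P = ∫ ω, D ω * Y ω ∂P := by
  have hmarg (x : ℝ) : P {ω | X ω ≤ x} = P {ω | Y ω ≤ x} := by
    have := congrArg (fun μ => μ (Iic x)) hXY
    simp only [Measure.map_apply hX measurableSet_Iic, Measure.map_apply hY measurableSet_Iic]
      at this
    exact this
  have h1 (y : ℝ) : Measure.map X (P.restrict (D ⁻¹' Iic y)) =
      Measure.map Y (P.restrict (D ⁻¹' Iic y)) := by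
    refine Measure.ext_of_Iic _ _ fun x => ?_
    rw [Measure.map_apply hX measurableSet_Iic, Measure.map_apply hY measurableSet_Iic,
      Measure.restrict_apply (hX measurableSet_Iic), Measure.restrict_apply (hY measurableSet_Iic)]
    have hx := haX x y
    rw [hmarg x, ← haY x y] at hx
    exact hx
  have h2 {s : Set ℝ} (hs : MeasurableSet s) : Measure.map D (P.restrict (X ⁻¹' s)) =
      Measure.map D (P.restrict (Y ⁻¹' s)) := by
    refine Measure.ext_of_Iic _ _ fun y => ?_
    have := congrArg (fun μ => μ s) (h1 y)
    simp only [Measure.map_apply hX hs, Measure.map_apply hY hs, Measure.restrict_apply (hX hs),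
      Measure.restrict_apply (hY hs)] at this
    rw [Measure.map_apply hD measurableSet_Iic, Measure.map_apply hD measurableSet_Iic,
      Measure.restrict_apply (hD measurableSet_Iic), Measure.restrict_apply (hD measurableSet_Iic),
      inter_comm, this, inter_comm]
  have hjoint : Measure.map (fun ω => (X ω, D ω)) P = Measure.map (fun ω => (Y ω, D ω)) P := by
    refine Measure.ext_prod fun {s t} hs ht => ?_
    rw [Measure.map_apply (hX.prodMk hD) (hs.prod ht), Measure.map_apply (hY.prodMk hD) (hs.prod ht)]
    have := congrArg (fun μ => μ t) (h2 hs)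
    simp only [Measure.map_apply hD ht, Measure.restrict_apply (hD ht)] at this
    rw [inter_comm, inter_comm _ (Y ⁻¹' s)] at this
    exact this
  have hf : Measurable fun z : ℝ × ℝ => z.2 * z.1 := measurable_snd.mul measurable_fst
  have e1 := integral_map (hX.prodMk hD).aemeasurable (μ := P)
    (f := fun z : ℝ × ℝ => z.2 * z.1) hf.aestronglyMeasurable
  have e2 := integral_map (hY.prodMk hD).aemeasurable (μ := P)
    (f := fun z : ℝ × ℝ => z.2 * z.1) hf.aestronglyMeasurable
  rw [← e1, hjoint, e2]

lemma SameLaw.integral_eq {P : Measure Ω} {X Y : Ω → ℝ} (h : SameLaw P X Y)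
    (hX : Measurable X) (hY : Measurable Y) : ∫ ω, X ω ∂P = ∫ ω, Y ω ∂P := by
  have e1 := integral_map hX.aemeasurable (μ := P) (f := fun z : ℝ => z)
    measurable_id.aestronglyMeasurable
  have e2 := integral_map hY.aemeasurable (μ := P) (f := fun z : ℝ => z)
    measurable_id.aestronglyMeasurable
  rw [← e1, h, e2]

lemma map_eq_add_restrict (P : Measure Ω) {X : Ω → ℝ} (hX : Measurable X) {A₁ A₂ : Set Ω}
    (h₁ : MeasurableSet A₁) (h₂ : MeasurableSet A₂) (hd : Disjoint A₁ A₂) :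
    Measure.map X P = Measure.map X (P.restrict A₁) + Measure.map X (P.restrict A₂) +
      Measure.map X (P.restrict (A₁ ∪ A₂)ᶜ) := by
  rw [← Measure.map_add _ _ hX, ← Measure.map_add _ _ hX, ← Measure.restrict_union hd h₂,
    Measure.restrict_add_restrict_compl (h₁.union h₂)]

lemma map_restrict_congr (P : Measure Ω) {X Y : Ω → ℝ} {A : Set Ω} (hA : MeasurableSet A)
    (h : ∀ ω ∈ A, X ω = Y ω) : Measure.map X (P.restrict A) = Measure.map Y (P.restrict A) :=
  Measure.map_congr (by filter_upwards [ae_restrict_mem hA] with ω hω using h ω hω)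

/-- Exchanging the values of `B` between a set `A₁` where `B` and `D` are both low and a set `A₂`
where both are high keeps the law of `B` but strictly changes `E[D B]`. -/
lemma exists_rearrangement_of_sets (P : Measure Ω) [IsProbabilityMeasure P] (hP : IsAtomless P)
    (pr : PairedSpaces P) {B D : Ω → ℝ} (hB : B ∈ pr.carrier) (hD : D ∈ pr.dual) (b d : ℝ)
    {A₁ A₂ : Set Ω} (h₁ : MeasurableSet A₁) (h₂ : MeasurableSet A₂) (heq : P A₁ = P A₂)
    (hpos : P A₁ ≠ 0) (hB₁ : ∀ ω ∈ A₁, B ω ≤ b) (hB₂ : ∀ ω ∈ A₂, b < B ω)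
    (hD₁ : ∀ ω ∈ A₁, D ω ≤ d) (hD₂ : ∀ ω ∈ A₂, d ≤ D ω)
    (hne : (∀ ω ∈ A₁, D ω ≠ d) ∨ ∀ ω ∈ A₂, D ω ≠ d) :
    ∃ Y, Measurable Y ∧ SameLaw P Y B ∧ ∫ ω, D ω * Y ω ∂P ≠ ∫ ω, D ω * B ω ∂P := by
  classical
  have hBm := pr.meas_carrier B hB
  have hd : Disjoint A₁ A₂ := disjoint_left.2 fun ω hω hω' => (hB₁ ω hω).not_gt (hB₂ ω hω')
  obtain ⟨Z₁, hZ₁, hm₁⟩ := exists_map_restrict_eq P hP h₁ hpos (Measure.map B (P.restrict A₂))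
    (by rw [Measure.map_apply hBm .univ]; simp [heq])
  obtain ⟨Z₂, hZ₂, hm₂⟩ := exists_map_restrict_eq P hP h₂ (heq ▸ hpos)
    (Measure.map B (P.restrict A₁)) (by rw [Measure.map_apply hBm .univ]; simp [heq])
  let Y : Ω → ℝ := A₁.piecewise Z₁ (A₂.piecewise Z₂ B)
  have hY : Measurable Y := hZ₁.piecewise h₁ (hZ₂.piecewise h₂ hBm)
  have hY₁ : ∀ ω ∈ A₁, Y ω = Z₁ ω := fun ω hω => by simp [Y, hω]
  have hY₂ : ∀ ω ∈ A₂, Y ω = Z₂ ω := fun ω hω => by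
    simp [Y, hω, disjoint_right.1 hd hω]
  have hY₃ : ∀ ω ∈ (A₁ ∪ A₂)ᶜ, Y ω = B ω := fun ω hω => by
    simp only [mem_compl_iff, mem_union, not_or] at hω
    simp [Y, hω.1, hω.2]
  have hlaw : SameLaw P Y B := by
    unfold SameLaw
    rw [map_eq_add_restrict P hY h₁ h₂ hd, map_eq_add_restrict P hBm h₁ h₂ hd,
      map_restrict_congr P h₁ hY₁, map_restrict_congr P h₂ hY₂,
      map_restrict_congr P (h₁.union h₂).compl hY₃, hm₁, hm₂,
      add_comm (Measure.map B (P.restrict A₂))]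
  have hgt : ∀ᵐ ω ∂P, ω ∈ A₁ → b < Y ω := by
    have : ∀ᵐ x ∂(Measure.map B (P.restrict A₂)), b < x := by
      rw [ae_map_iff hBm.aemeasurable measurableSet_Ioi]
      filter_upwards [ae_restrict_mem h₂] with ω hω using hB₂ ω hω
    rw [← hm₁, ae_map_iff hZ₁.aemeasurable measurableSet_Ioi, ae_restrict_iff' h₁] at this
    filter_upwards [this] with ω hω hA
    rw [hY₁ ω hA]
    exact hω hA
  have hle : ∀ᵐ ω ∂P, ω ∈ A₂ → Y ω ≤ b := by
    have : ∀ᵐ x ∂(Measure.map B (P.restrict A₁)), x ≤ b := by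
      rw [ae_map_iff hBm.aemeasurable measurableSet_Iic]
      filter_upwards [ae_restrict_mem h₁] with ω hω using hB₁ ω hω
    rw [← hm₂, ae_map_iff hZ₂.aemeasurable measurableSet_Iic, ae_restrict_iff' h₂] at this
    filter_upwards [this] with ω hω hA
    rw [hY₂ ω hA]
    exact hω hA
  refine ⟨Y, hY, hlaw, fun hint => ?_⟩
  have hYc : Y ∈ pr.carrier := pr.lawinv_carrier B hB Y hY hlaw
  have iY := pr.int_carrier Y hYc
  have iB := pr.int_carrier B hB
  have iDY : Integrable (fun ω => D ω * Y ω) P := by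
    simpa only [mul_comm] using pr.mul_int Y hYc D hD
  have iDB : Integrable (fun ω => D ω * B ω) P := by
    simpa only [mul_comm] using pr.mul_int B hB D hD
  -- Since `E[Y] = E[B]`, the price drop `E[D B] - E[D Y]` is the integral of `(d - D) * (Y - B) ≥ 0`.
  let f : Ω → ℝ := fun ω => d * (Y ω - B ω) - (D ω * Y ω - D ω * B ω)
  have if1 : Integrable (fun ω => d * (Y ω - B ω)) P := (iY.sub iB).const_mul d
  have if2 : Integrable (fun ω => D ω * Y ω - D ω * B ω) P := iDY.sub iDB
  have hf : Integrable f P := if1.sub if2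
  have hf0 : ∫ ω, f ω ∂P = 0 := by
    simp only [f]
    rw [integral_sub if1 if2, integral_const_mul, integral_sub iY iB, integral_sub iDY iDB, hint,
      hlaw.integral_eq hY hBm]
    ring
  have hff (ω : Ω) : f ω = (d - D ω) * (Y ω - B ω) := by simp only [f]; ring
  have hfnn : 0 ≤ᵐ[P] f := by
    filter_upwards [hgt, hle] with ω hg hl
    change 0 ≤ f ω
    rw [hff]
    by_cases hω₁ : ω ∈ A₁
    · exact mul_nonneg (sub_nonneg.2 (hD₁ ω hω₁)) (by linarith [hg hω₁, hB₁ ω hω₁])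
    · by_cases hω₂ : ω ∈ A₂
      · exact mul_nonneg_of_nonpos_of_nonpos (by linarith [hD₂ ω hω₂])
          (by linarith [hl hω₂, hB₂ ω hω₂])
      · rw [hY₃ ω (by simp [hω₁, hω₂])]
        simp
  have hfz := (integral_eq_zero_iff_of_nonneg_ae hfnn hf).1 hf0
  rcases hne with hne | hne
  · apply hpos
    refine measure_eq_zero_iff_ae_notMem.2 ?_
    filter_upwards [hfz, hgt] with ω hz hg hω
    rw [hff] at hz
    rcases mul_eq_zero.1 hz with h | h
    · exact hne ω hω (by linarith)
    · linarith [hg hω, hB₁ ω hω]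
  · apply hpos
    rw [heq]
    refine measure_eq_zero_iff_ae_notMem.2 ?_
    filter_upwards [hfz, hle] with ω hz hg hω
    rw [hff] at hz
    rcases mul_eq_zero.1 hz with h | h
    · exact hne ω hω (by linarith)
    · linarith [hg hω, hB₂ ω hω]

lemma exists_equal_measure_subsets (P : Measure Ω) [IsProbabilityMeasure P] (hP : IsAtomless P)
    {S T : Set Ω} (hS : MeasurableSet S) (hT : MeasurableSet T) (hS0 : P S ≠ 0) (hT0 : P T ≠ 0) :
    ∃ A₁ A₂, MeasurableSet A₁ ∧ MeasurableSet A₂ ∧ A₁ ⊆ S ∧ A₂ ⊆ T ∧ P A₁ = P A₂ ∧ P A₁ ≠ 0 := by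
  have hS1 : 0 < P.real S := ENNReal.toReal_pos hS0 (measure_ne_top _ _)
  have hT1 : 0 < P.real T := ENNReal.toReal_pos hT0 (measure_ne_top _ _)
  have hc : 0 < min (P.real S) (P.real T) := lt_min hS1 hT1
  obtain ⟨A₁, h₁, hs₁, e₁⟩ := exists_subset_measureReal_eq P hP hS hc.le (min_le_left _ _)
  obtain ⟨A₂, h₂, hs₂, e₂⟩ := exists_subset_measureReal_eq P hP hT hc.le (min_le_right _ _)
  refine ⟨A₁, A₂, h₁, h₂, hs₁, hs₂, ?_, ?_⟩
  · exact (measureReal_eq_measureReal_iff (measure_ne_top _ _) (measure_ne_top _ _)).1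
      (e₁.trans e₂.symm)
  · intro h
    rw [measureReal_def, h] at e₁
    simp at e₁
    linarith

/-- A nonconstant integrable variable lies on either side of its mean with positive probability. -/
lemma Nonconstant.mean_splits {P : Measure Ω} [IsProbabilityMeasure P] {X : Ω → ℝ}
    (hX : Nonconstant P X) (hi : Integrable X P) :
    P {ω | X ω ≤ ∫ ω, X ω ∂P} ≠ 0 ∧ P {ω | ∫ ω, X ω ∂P < X ω} ≠ 0 := by
  refine ⟨(measure_le_integral_pos hi).ne', fun h => hX (∫ ω, X ω ∂P) ?_⟩
  have hle : ∀ᵐ ω ∂P, X ω ≤ ∫ ω, X ω ∂P := by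
    filter_upwards [measure_eq_zero_iff_ae_notMem.1 h] with ω hω using not_lt.1 hω
  exact (integral_eq_iff_of_ae_le hi (integrable_const _) hle).1 (by simp)

/-- Nonconstant `B` and `D` leave room for a rearrangement of `B` whose price differs from that of `B`. -/
lemma exists_rearrangement (P : Measure Ω) [IsProbabilityMeasure P] (hP : IsAtomless P)
    (pr : PairedSpaces P) {B D : Ω → ℝ} (hB : B ∈ pr.carrier) (hD : D ∈ pr.dual)
    (hBnc : Nonconstant P B) (hDnc : Nonconstant P D) :
    ∃ Y, Measurable Y ∧ SameLaw P Y B ∧ ∫ ω, D ω * Y ω ∂P ≠ ∫ ω, D ω * B ω ∂P := by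
  obtain ⟨hB1, hB2⟩ := hBnc.mean_splits (pr.int_carrier B hB)
  obtain ⟨hD1, hD2⟩ := hDnc.mean_splits (pr.int_dual D hD)
  have hBm := pr.meas_carrier B hB
  have hDm := pr.meas_dual D hD
  set b := ∫ ω, B ω ∂P
  set d := ∫ ω, D ω ∂P
  have mB1 : MeasurableSet {ω | B ω ≤ b} := measurableSet_le hBm measurable_const
  have mB2 : MeasurableSet {ω | b < B ω} := measurableSet_lt measurable_const hBm
  have mD1 : MeasurableSet {ω | D ω ≤ d} := measurableSet_le hDm measurable_const
  have mD2 : MeasurableSet {ω | d < D ω} := measurableSet_lt measurable_const hDm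
  by_cases hdiag : P ({ω | B ω ≤ b} ∩ {ω | D ω ≤ d}) ≠ 0 ∧ P ({ω | b < B ω} ∩ {ω | d < D ω}) ≠ 0
  · obtain ⟨A₁, A₂, h₁, h₂, s₁, s₂, heq, hpos⟩ := exists_equal_measure_subsets P hP
      (mB1.inter mD1) (mB2.inter mD2) hdiag.1 hdiag.2
    exact exists_rearrangement_of_sets P hP pr hB hD b d h₁ h₂ heq hpos
      (fun ω hω => (s₁ hω).1) (fun ω hω => (s₂ hω).1) (fun ω hω => (s₁ hω).2)
      (fun ω hω => (s₂ hω).2.le) (.inr fun ω hω => ne_of_gt (s₂ hω).2)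
  · -- A null diagonal quadrant forces both off-diagonal ones to be charged.
    have hoff : P ({ω | B ω ≤ b} ∩ {ω | d < D ω}) ≠ 0 ∧
        P ({ω | b < B ω} ∩ {ω | D ω ≤ d}) ≠ 0 := by
      have cover {S U V : Set Ω} (hS : P S ≠ 0) (h : S ⊆ U ∪ V) : P U = 0 → P V ≠ 0 :=
        fun hU hV => hS (measure_mono_null h (measure_union_null hU hV))
      rcases not_and_or.1 hdiag with h | h
      · rw [not_not] at h
        refine ⟨cover hB1 (fun ω hω => ?_) h, cover hD1 (fun ω hω => ?_) h⟩
        · rcases le_or_gt (D ω) d with h' | h'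
          exacts [.inl ⟨hω, h'⟩, .inr ⟨hω, h'⟩]
        · rcases le_or_gt (B ω) b with h' | h'
          exacts [.inl ⟨h', hω⟩, .inr ⟨h', hω⟩]
      · rw [not_not] at h
        refine ⟨cover hD2 (fun ω hω => ?_) h, cover hB2 (fun ω hω => ?_) h⟩
        · rcases le_or_gt (B ω) b with h' | h'
          exacts [.inr ⟨h', hω⟩, .inl ⟨h', hω⟩]
        · rcases le_or_gt (D ω) d with h' | h'
          exacts [.inr ⟨hω, h'⟩, .inl ⟨hω, h'⟩]
    obtain ⟨A₁, A₂, h₁, h₂, s₁, s₂, heq, hpos⟩ := exists_equal_measure_subsets P hP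
      (mB1.inter mD2) (mB2.inter mD1) hoff.1 hoff.2
    -- The off-diagonal case is the diagonal one for `-D`.
    obtain ⟨Y, hY, hlaw, hne⟩ := exists_rearrangement_of_sets P hP pr hB
      (pr.smul_dual D hD (-1)) b (-d) h₁ h₂ heq hpos
      (fun ω hω => (s₁ hω).1) (fun ω hω => (s₂ hω).1)
      (fun ω hω => by have : d < D ω := (s₁ hω).2; linarith)
      (fun ω hω => by have : D ω ≤ d := (s₂ hω).2; linarith)
      (.inl fun ω hω => by
        have : d < D ω := (s₁ hω).2
        exact ne_of_lt (by linarith))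
    refine ⟨Y, hY, hlaw, fun h => hne ?_⟩
    simp only [mul_assoc, integral_const_mul, h]

/-! ### The sharpness result -/

/-- for a domain `C` bounded above (w.r.t. a preference compatible with
the expectation) by a nonconstant `B ∈ C`, and any nonconstant `D` with `E[D] > 0`,
there is a law-invariant objective `φ` and a price `p` making the quadruple feasible
with: `φ` weakly increasing but no optimal solution antimonotone with `D`; and `φ`
increasing with finite optimal value but some optimal solution not antimonotone. -/
theorem sharpness_preference_domain
    (P : Measure Ω) [IsProbabilityMeasure P] (hP : IsAtomless P)
    (pr : PairedSpaces P)
    (R : (Ω → ℝ) → (Ω → ℝ) → Prop)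
    (hrefl : ∀ X ∈ pr.carrier, R X X)
    (htrans : ∀ X ∈ pr.carrier, ∀ Y ∈ pr.carrier, ∀ Z ∈ pr.carrier,
      R X Y → R Y Z → R X Z)
    (hcompat : ∀ X ∈ pr.carrier, ∀ Y ∈ pr.carrier, R X Y → (∫ ω, Y ω ∂P) ≤ ∫ ω, X ω ∂P)
    (C : Set (Ω → ℝ)) (hCsub : C ⊆ pr.carrier) (hClaw : LawInvariantSet P C)
    (B : Ω → ℝ) (hB : B ∈ C) (hBnc : Nonconstant P B)
    (hCdom : ∀ Y ∈ C, R B Y)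
    (D : Ω → ℝ) (hD : D ∈ pr.dual)
    (hDnc : Nonconstant P D) (hED : 0 < ∫ ω, D ω ∂P) :
    ∃ φ : (Ω → ℝ) → EReal, ∃ p : ℝ,
      LawInvariantFn P pr.carrier φ ∧
      (∃ X, IsOptimal P φ C D p X) ∧
      WeaklyIncreasingFn pr.carrier φ ∧
      (∀ X, IsOptimal P φ C D p X → ¬ Antimonotone P X D) ∧
      IncreasingFn pr.carrier φ ∧
      (∃ X, IsOptimal P φ C D p X ∧ φ X ≠ (⊤ : EReal) ∧ φ X ≠ (⊥ : EReal)) ∧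
      (∃ X, IsOptimal P φ C D p X ∧ ¬ Antimonotone P X D) := by
  classical
  have hBc : B ∈ pr.carrier := hCsub hB
  have hBm := pr.meas_carrier B hBc
  have hDm := pr.meas_dual D hD
  -- A price attained by a rearrangement of `B` but by no antimonotone one.
  obtain ⟨Y, hYm, hYlaw, hYanti⟩ : ∃ Y, Measurable Y ∧ SameLaw P Y B ∧
      ∀ X, Measurable X → SameLaw P X B → ∫ ω, D ω * X ω ∂P = ∫ ω, D ω * Y ω ∂P →
        ¬ Antimonotone P X D := by
    obtain ⟨Y, hY, hlaw, hne⟩ := exists_rearrangement P hP pr hBc hD hBnc hDnc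
    by_cases h : ∀ X, Measurable X → SameLaw P X B →
        ∫ ω, D ω * X ω ∂P = ∫ ω, D ω * B ω ∂P → ¬ Antimonotone P X D
    · exact ⟨B, hBm, rfl, h⟩
    · push Not at h
      obtain ⟨X₀, hX₀, hX₀B, hint, ha⟩ := h
      refine ⟨Y, hY, hlaw, fun X hX hXB hXint haX => hne ?_⟩
      rw [← hXint, ← hint]
      exact integral_eq_of_antimonotone P hX hX₀ hDm (hXB.trans hX₀B.symm) haX ha
  have hYC : Y ∈ C := hClaw B hB Y hYm hYlaw
  have hmean : ∀ X ∈ pr.carrier, SameLaw P X B → ∫ ω, X ω ∂P = ∫ ω, B ω ∂P :=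
    fun X hX h => h.integral_eq (pr.meas_carrier X hX) hBm
  have hCle : ∀ X ∈ C, ∫ ω, X ω ∂P ≤ ∫ ω, B ω ∂P := fun X hX =>
    hcompat B hBc X (hCsub hX) (hCdom X hX)
  -- On `C` this objective singles out exactly the rearrangements of `B`.
  let φ : (Ω → ℝ) → EReal := fun X =>
    if (∫ ω, B ω ∂P < ∫ ω, X ω ∂P) ∨ SameLaw P X B then ((∫ ω, X ω ∂P : ℝ) : EReal) else ⊥
  have hφY : φ Y = ((∫ ω, B ω ∂P : ℝ) : EReal) := by
    simp only [φ]
    rw [if_pos (.inr hYlaw), hmean Y (hCsub hYC) hYlaw]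
  have hφC : ∀ X ∈ C, φ X ≤ φ Y := by
    intro X hX
    rw [hφY]
    simp only [φ]
    split_ifs
    · exact_mod_cast hCle X hX
    · exact bot_le
  have hshift : ∀ X ∈ pr.carrier, φ X ≠ ⊥ → ∀ m : ℝ, 0 < m →
      φ X < φ (fun ω => X ω + m) := by
    intro X hX hbot m hm
    have hc : (∫ ω, B ω ∂P < ∫ ω, X ω ∂P) ∨ SameLaw P X B := by
      by_contra h
      exact hbot (if_neg h)
    have hle : ∫ ω, B ω ∂P ≤ ∫ ω, X ω ∂P := hc.elim le_of_lt fun h => (hmean X hX h).ge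
    have hi : ∫ ω, (X ω + m) ∂P = ∫ ω, X ω ∂P + m := by
      rw [integral_add (pr.int_carrier X hX) (integrable_const m)]
      simp
    simp only [φ]
    rw [if_pos hc, if_pos (.inl (by rw [hi]; linarith)), hi]
    exact_mod_cast lt_add_of_pos_right _ hm
  have hopt : IsOptimal P φ C D (∫ ω, D ω * Y ω ∂P) Y := ⟨hYC, rfl, fun X hX _ => hφC X hX⟩
  have hanti : ∀ X, IsOptimal P φ C D (∫ ω, D ω * Y ω ∂P) X → ¬ Antimonotone P X D := by
    rintro X ⟨hXC, hXp, hXopt⟩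
    have h1 := hXopt Y hYC rfl
    have hlaw : SameLaw P X B := by
      by_contra h
      have hbot : φ X = ⊥ := if_neg (not_or.2 ⟨(hCle X hXC).not_gt, h⟩)
      rw [hbot, hφY, le_bot_iff] at h1
      exact EReal.coe_ne_bot _ h1
    exact hYanti X (pr.meas_carrier X (hCsub hXC)) hlaw hXp
  refine ⟨φ, ∫ ω, D ω * Y ω ∂P, ?_, ⟨Y, hopt⟩, ?_, hanti, ?_,
    ⟨Y, hopt, by rw [hφY]; exact EReal.coe_ne_top _, by rw [hφY]; exact EReal.coe_ne_bot _⟩,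
    ⟨Y, hopt, hanti Y hopt⟩⟩
  · intro X hX X' hX' h
    have hi := h.integral_eq (pr.meas_carrier X hX) (pr.meas_carrier X' hX')
    have hiff : SameLaw P X B ↔ SameLaw P X' B :=
      ⟨fun h' => h.symm.trans h', fun h' => h.trans h'⟩
    simp only [φ, hi, hiff]
  · intro X hX m hm
    rcases hm.eq_or_lt with rfl | hm
    · simp
    · by_cases hbot : φ X = ⊥
      · rw [hbot]; exact bot_le
      · exact (hshift X hX hbot m hm).le
  · intro X hX h m hm
    exact hshift X hX h.2 m hm

end Collapse
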